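/- Let R be the quotient of ℂ⟨e1,e2,e3⟩ by the two-sided ideal generated by e1e2 + e2e1 − e3, e1e3 + e3e1 − e2, e2e3 − e3e2, e2², and e3². Then h_n = 1 for every n ≥ 0; equivalently, the Poincaré series Σ_{n≥0} h_n z^n equals 1/(1−z). -/

import Mathlib

open CategoryTheory FreeAlgebra

/-- `Ext^m_R(ℂ,ℂ)` as a ℂ-module, where `ℂ` is an `R`-module via the augmentation `ε`. -/
noncomputable def extC (R : Type) [Ring R] [Algebra ℂ R] (ε : R →ₐ[ℂ] ℂ) (m : ℕ) :
    ModuleCat ℂ :=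
  letI : Module R ℂ := Module.compHom ℂ ε.toRingHom
  ((Ext ℂ (ModuleCat R) m).obj (Opposite.op (ModuleCat.of R ℂ))).obj (ModuleCat.of R ℂ)

/-- `h_m = dim_ℂ Ext^m_R(ℂ,ℂ)`. -/
noncomputable def extDim (R : Type) [Ring R] [Algebra ℂ R] (ε : R →ₐ[ℂ] ℂ) (m : ℕ) : ℕ :=
  Module.finrank ℂ (extC R ε m)

/-- Relations: `e1e2 + e2e1 = e3`, `e1e3 + e3e1 = e2`, `e2e3 - e3e2 = 0`, `e2² = 0`, `e3² = 0`. -/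
inductive CRel : FreeAlgebra ℂ (Fin 3) → FreeAlgebra ℂ (Fin 3) → Prop
  | r12 : CRel (ι ℂ 0 * ι ℂ 1 + ι ℂ 1 * ι ℂ 0) (ι ℂ 2)
  | r13 : CRel (ι ℂ 0 * ι ℂ 2 + ι ℂ 2 * ι ℂ 0) (ι ℂ 1)
  | r23 : CRel (ι ℂ 1 * ι ℂ 2 - ι ℂ 2 * ι ℂ 1) 0
  | r22 : CRel (ι ℂ 1 * ι ℂ 1) 0
  | r33 : CRel (ι ℂ 2 * ι ℂ 2) 0

namespace BettiAux

open Polynomial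

/-- PBW-type data for the algebra: eigenvector generators and coordinates. -/
structure PBW (R : Type) [Ring R] [Algebra ℂ R] where
  x : R
  u : R
  v : R
  c : Fin 4 → R →ₗ[ℂ] ℂ[X]
  xu : x * u + u * x = u
  xv : x * v + v * x = -v
  uv : u * v = 0
  vu : v * u = 0
  uu : u * u + v * v = 0
  inj : ∀ r s, (∀ i, c i r = c i s) → r = s
  surj : ∀ p : Fin 4 → ℂ[X], ∃ r, ∀ i, c i r = p i
  cu : ∀ r i, c i (r * u) = ![0, c 0 r, 0, c 1 r] i
  cv : ∀ r i, c i (r * v) = ![0, 0, c 0 r, - c 2 r] i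
  cx : ∀ r, c 0 (r * x) = X * c 0 r
  c1 : c 0 1 = 1

/-- The generators of the algebra. -/
noncomputable def e (i : Fin 3) : RingQuot CRel := RingQuot.mkAlgHom ℂ CRel (ι ℂ i)

lemma e12 : e 0 * e 1 + e 1 * e 0 = e 2 := by
  simpa [e] using RingQuot.mkAlgHom_rel ℂ CRel.r12
lemma e13 : e 0 * e 2 + e 2 * e 0 = e 1 := by
  simpa [e] using RingQuot.mkAlgHom_rel ℂ CRel.r13
lemma e23 : e 1 * e 2 - e 2 * e 1 = 0 := by
  simpa [e] using RingQuot.mkAlgHom_rel ℂ CRel.r23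
lemma e22 : e 1 * e 1 = 0 := by
  simpa [e] using RingQuot.mkAlgHom_rel ℂ CRel.r22
lemma e33 : e 2 * e 2 = 0 := by
  simpa [e] using RingQuot.mkAlgHom_rel ℂ CRel.r33

/-- The matrices of right multiplication by the generators. -/
noncomputable def mat : Fin 3 → Matrix (Fin 4) (Fin 4) ℂ[X] :=
  ![!![X, 0, 0, 0; 0, 1 - X, 0, 0; 0, 0, -1 - X, 0; 0, 0, 0, X],
    !![0, C (1/2), C (1/2), 0; 0, 0, 0, C (1/2); 0, 0, 0, - C (1/2); 0, 0, 0, 0],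
    !![0, C (1/2), - C (1/2), 0; 0, 0, 0, C (1/2); 0, 0, 0, C (1/2); 0, 0, 0, 0]]

/-- The matrix representation. -/
noncomputable def rho : RingQuot CRel →ₐ[ℂ] Matrix (Fin 4) (Fin 4) ℂ[X] :=
  RingQuot.liftAlgHom ℂ ⟨FreeAlgebra.lift ℂ mat, by
    intro a b h
    cases h <;> simp only [map_add, map_mul, map_sub, map_zero, FreeAlgebra.lift_ι_apply, mat] <;>
    · ext1 i j
      fin_cases i <;> fin_cases j <;> simp [Matrix.mul_apply, Fin.sum_univ_four] <;> ring⟩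

lemma rho_e (i : Fin 3) : rho (e i) = mat i := by
  simp [rho, e]

/-- Coordinates: the first row of the matrix. -/
noncomputable def crd (i : Fin 4) : RingQuot CRel →ₗ[ℂ] ℂ[X] where
  toFun r := rho r 0 i
  map_add' a b := by simp
  map_smul' a b := by simp

lemma crd_mul (r s : RingQuot CRel) (i : Fin 4) :
    crd i (r * s) = ∑ j, crd j r * rho s j i := by
  simp [crd, Matrix.mul_apply]

/-- The inverse of the coordinates. -/
noncomputable def asm (p : Fin 4 → ℂ[X]) : RingQuot CRel :=
  aeval (e 0) (p 0) + aeval (e 0) (p 1) * (e 1 + e 2) + aeval (e 0) (p 2) * (e 1 - e 2)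
    + aeval (e 0) (p 3) * ((e 1 + e 2) * (e 1 + e 2))

lemma rho_aeval (p : ℂ[X]) (j : Fin 4) : rho (aeval (e 0) p) 0 j = if j = 0 then p else 0 := by
  induction p using Polynomial.induction_on' with
  | add p q hp hq => simp only [map_add, Matrix.add_apply, hp, hq]; split_ifs <;> simp
  | monomial n a =>
    induction n generalizing j with
    | zero => fin_cases j <;> simp [Matrix.algebraMap_matrix_apply]
    | succ n ih =>
      have : (monomial (n+1) a : ℂ[X]) = monomial n a * X := by simp [monomial_mul_X]
      rw [this, map_mul, map_mul, Matrix.mul_apply]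
      simp only [ih, aeval_X, rho_e]
      fin_cases j <;> simp [mat]

lemma half_add : (C (1/2) + C (1/2) : ℂ[X]) = 1 := by
  rw [← C_add, ← C_1]; norm_num

lemma rho_u : rho (e 1 + e 2) = !![0, 1, 0, 0; 0, 0, 0, 1; 0, 0, 0, 0; 0, 0, 0, 0] := by
  rw [map_add, rho_e, rho_e]
  ext1 i j
  fin_cases i <;> fin_cases j <;> simp only [mat] <;> first | exact half_add | simp

lemma rho_v : rho (e 1 - e 2) = !![0, 0, 1, 0; 0, 0, 0, 0; 0, 0, 0, -1; 0, 0, 0, 0] := by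
  rw [map_sub, rho_e, rho_e]
  have h := half_add
  ext1 i j
  fin_cases i <;> fin_cases j <;> simp [mat] <;> simp at h <;> first | exact h | linear_combination -h

lemma crd_u (r : RingQuot CRel) (i : Fin 4) :
    crd i (r * (e 1 + e 2)) = ![0, crd 0 r, 0, crd 1 r] i := by
  rw [crd_mul, rho_u]
  fin_cases i <;> simp [Fin.sum_univ_four]

lemma crd_v (r : RingQuot CRel) (i : Fin 4) :
    crd i (r * (e 1 - e 2)) = ![0, 0, crd 0 r, - crd 2 r] i := by
  rw [crd_mul, rho_v]
  fin_cases i <;> simp [Fin.sum_univ_four]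

lemma crd_x (r : RingQuot CRel) : crd 0 (r * e 0) = X * crd 0 r := by
  rw [crd_mul, rho_e]
  simp [Fin.sum_univ_four, mat, mul_comm]

lemma crd_aeval (p : ℂ[X]) (j : Fin 4) : crd j (aeval (e 0) p) = if j = 0 then p else 0 :=
  rho_aeval p j

lemma crd_asm (p : Fin 4 → ℂ[X]) (i : Fin 4) : crd i (asm p) = p i := by
  simp only [asm, map_add, ← mul_assoc, crd_u, crd_v, crd_aeval]
  fin_cases i <;> simp

lemma gen_rel {R : Type} [Ring R] (x a b : R) (h12 : x * a + a * x = b) (h13 : x * b + b * x = a)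
    (h23 : a * b - b * a = 0) (h22 : a * a = 0) (h33 : b * b = 0) :
    (x * (a + b) + (a + b) * x = a + b) ∧ (x * (a - b) + (a - b) * x = - (a - b)) ∧
    ((a + b) * x = (1 - x) * (a + b)) ∧ ((a - b) * x = (-1 - x) * (a - b)) ∧
    ((a + b) * (a - b) = 0) ∧ ((a - b) * (a + b) = 0) ∧
    ((a + b) * (a + b) + (a - b) * (a - b) = 0) ∧ ((a + b) * ((a + b) * (a + b)) = 0) ∧
    ((a + b) * (a + b) * x = x * ((a + b) * (a + b))) := by
  have h23' : a * b = b * a := sub_eq_zero.1 h23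
  have h1 : x * (a + b) + (a + b) * x = a + b := by
    calc _ = (x * a + a * x) + (x * b + b * x) := by noncomm_ring
      _ = _ := by rw [h12, h13, add_comm]
  have h2 : x * (a - b) + (a - b) * x = - (a - b) := by
    calc _ = (x * a + a * x) - (x * b + b * x) := by noncomm_ring
      _ = _ := by rw [h12, h13]; abel
  have h3 : (a + b) * x = (1 - x) * (a + b) := by
    rw [sub_mul, one_mul, eq_sub_iff_add_eq, add_comm, h1]
  have h4 : (a - b) * x = (-1 - x) * (a - b) := by
    rw [sub_mul (-1 : R), neg_one_mul, eq_sub_iff_add_eq, add_comm, h2]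
  have h5 : (a + b) * (a - b) = 0 := by
    simp only [mul_sub, add_mul, h22, h33, h23']; abel
  have h6 : (a - b) * (a + b) = 0 := by
    simp only [mul_add, sub_mul, h22, h33, h23']; abel
  have h7 : (a + b) * (a + b) + (a - b) * (a - b) = 0 := by
    simp only [mul_add, mul_sub, sub_mul, add_mul, h22, h33, h23']; abel
  refine ⟨h1, h2, h3, h4, h5, h6, h7, ?_, ?_⟩
  · rw [eq_neg_of_add_eq_zero_left h7, mul_neg, ← mul_assoc, h5]; simp
  · rw [mul_assoc, h3, ← mul_assoc, mul_sub, h3, mul_one, sub_mul, sub_mul, sub_mul, one_mul]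
    rw [mul_assoc]; abel

lemma xu : e 0 * (e 1 + e 2) + (e 1 + e 2) * e 0 = e 1 + e 2 :=
  (gen_rel _ _ _ e12 e13 e23 e22 e33).1

lemma xv : e 0 * (e 1 - e 2) + (e 1 - e 2) * e 0 = - (e 1 - e 2) :=
  (gen_rel _ _ _ e12 e13 e23 e22 e33).2.1

lemma ux : (e 1 + e 2) * e 0 = (1 - e 0) * (e 1 + e 2) :=
  (gen_rel _ _ _ e12 e13 e23 e22 e33).2.2.1

lemma vx : (e 1 - e 2) * e 0 = (-1 - e 0) * (e 1 - e 2) :=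
  (gen_rel _ _ _ e12 e13 e23 e22 e33).2.2.2.1

lemma uv : (e 1 + e 2) * (e 1 - e 2) = 0 :=
  (gen_rel _ _ _ e12 e13 e23 e22 e33).2.2.2.2.1

lemma vu : (e 1 - e 2) * (e 1 + e 2) = 0 :=
  (gen_rel _ _ _ e12 e13 e23 e22 e33).2.2.2.2.2.1

lemma uu : (e 1 + e 2) * (e 1 + e 2) + (e 1 - e 2) * (e 1 - e 2) = 0 :=
  (gen_rel _ _ _ e12 e13 e23 e22 e33).2.2.2.2.2.2.1

lemma uuu : (e 1 + e 2) * ((e 1 + e 2) * (e 1 + e 2)) = 0 :=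
  (gen_rel _ _ _ e12 e13 e23 e22 e33).2.2.2.2.2.2.2.1

lemma uux : (e 1 + e 2) * (e 1 + e 2) * e 0 = e 0 * ((e 1 + e 2) * (e 1 + e 2)) :=
  (gen_rel _ _ _ e12 e13 e23 e22 e33).2.2.2.2.2.2.2.2

lemma asm_x (p : Fin 4 → ℂ[X]) :
    asm p * e 0 = asm ![p 0 * X, p 1 * (1 - X), p 2 * (-1 - X), p 3 * X] := by
  unfold asm
  rw [add_mul, add_mul, add_mul, mul_assoc (aeval (e 0) _), mul_assoc (aeval (e 0) _),
    mul_assoc (aeval (e 0) _), ux, vx, uux]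
  simp [mul_assoc]

lemma asm_u (p : Fin 4 → ℂ[X]) : asm p * (e 1 + e 2) = asm ![0, p 0, 0, p 1] := by
  unfold asm
  rw [add_mul, add_mul, add_mul]
  simp only [mul_assoc, vu, uuu]
  simp

lemma gen_neg {R : Type} [Ring R] (a b : R) : a * -b = -a * b := by simp

lemma asm_v (p : Fin 4 → ℂ[X]) : asm p * (e 1 - e 2) = asm ![0, 0, p 0, - p 2] := by
  have h : (e 1 - e 2) * (e 1 - e 2) = - ((e 1 + e 2) * (e 1 + e 2)) :=
    eq_neg_of_add_eq_zero_right uu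
  unfold asm
  rw [add_mul, add_mul, add_mul]
  simp only [mul_assoc, uv, h]
  simp
  exact gen_neg _ _

lemma asm_add (p q : Fin 4 → ℂ[X]) : asm p + asm q = asm (p + q) := by
  simp only [asm, Pi.add_apply, map_add, add_mul]; abel

lemma asm_smul (a : ℂ) (p : Fin 4 → ℂ[X]) : asm (a • p) = a • asm p := by
  simp [asm]

lemma asm_surj (r : RingQuot CRel) : ∃ p, asm p = r := by
  suffices H : ∀ s p, ∃ q, asm q = asm p * RingQuot.mkAlgHom ℂ CRel s by
    obtain ⟨s, rfl⟩ := RingQuot.mkAlgHom_surjective ℂ CRel r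
    obtain ⟨q, hq⟩ := H s ![1, 0, 0, 0]
    exact ⟨q, by rw [hq]; simp [asm]⟩
  intro s
  induction s using FreeAlgebra.induction with
  | grade0 a =>
    intro p
    exact ⟨a • p, by rw [asm_smul, AlgHom.commutes, ← Algebra.commutes, Algebra.smul_def]⟩
  | grade1 i =>
    intro p
    change ∃ q, asm q = asm p * e i
    have h1 : e 1 = (1 / 2 : ℂ) • ((e 1 + e 2) + (e 1 - e 2)) := by module
    have h2 : e 2 = (1 / 2 : ℂ) • ((e 1 + e 2) - (e 1 - e 2)) := by module
    fin_cases i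
    · exact ⟨_, (asm_x p).symm⟩
    · change ∃ q, asm q = asm p * e 1
      rw [h1, mul_smul_comm, mul_add, asm_u, asm_v, asm_add, ← asm_smul]
      exact ⟨_, rfl⟩
    · change ∃ q, asm q = asm p * e 2
      rw [h2, mul_smul_comm, mul_sub, asm_u, asm_v, sub_eq_add_neg, ← neg_one_smul ℂ (asm _),
        ← asm_smul (-1), asm_add, ← asm_smul]
      exact ⟨_, rfl⟩
  | mul a b ha hb =>
    intro p
    obtain ⟨q, hq⟩ := ha p
    obtain ⟨q', hq'⟩ := hb q
    exact ⟨q', by rw [hq', hq, map_mul, mul_assoc]⟩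
  | add a b ha hb =>
    intro p
    obtain ⟨q, hq⟩ := ha p
    obtain ⟨q', hq'⟩ := hb p
    exact ⟨q + q', by rw [← asm_add, hq', hq, map_add, mul_add]⟩

/-- The PBW data of the algebra. -/
noncomputable def pbw : PBW (RingQuot CRel) where
  x := e 0
  u := e 1 + e 2
  v := e 1 - e 2
  c := crd
  xu := xu
  xv := xv
  uv := uv
  vu := vu
  uu := uu
  inj r s h := by
    obtain ⟨p, rfl⟩ := asm_surj r
    obtain ⟨q, rfl⟩ := asm_surj s
    congr 1
    ext1 i
    simpa [crd_asm] using h i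
  surj p := ⟨asm p, crd_asm p⟩
  cu := crd_u
  cv := crd_v
  cx := crd_x
  c1 := by simp [crd]

end BettiAux
namespace BettiAux

open Polynomial

section complex

variable {R : Type} [Ring R] [Algebra ℂ R] (B : PBW R)

/-- Alternating generator, first. -/
noncomputable def PBW.s (n : ℕ) : R := if Even n then B.u else B.v

/-- Alternating generator, second. -/
noncomputable def PBW.t (n : ℕ) : R := if Even n then B.v else B.u

/-- The weights. -/
noncomputable def lam (n p : ℕ) : ℂ := (-1) ^ n * (2 * p - n)

/-- The Koszul differential. -/
noncomputable def PBW.d (n : ℕ) : (Fin (n + 1) → R) →ₗ[R] (Fin n → R) where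
  toFun f p := f p.succ * B.s n + f p.castSucc * B.t n
  map_add' f g := by ext p; simp only [Pi.add_apply, add_mul]; abel
  map_smul' a f := by ext p; simp [mul_add, mul_assoc]

/-- The twisted multiplication by `x - λ`. -/
noncomputable def PBW.m (n : ℕ) : (Fin (n + 1) → R) →ₗ[R] (Fin (n + 1) → R) where
  toFun f p := f p * (B.x - algebraMap ℂ R (lam n p))
  map_add' f g := by ext p; simp only [Pi.add_apply, add_mul]
  map_smul' a f := by ext p; simp [mul_assoc]

lemma PBW.d_apply (n : ℕ) (f : Fin (n + 1) → R) (p : Fin n) :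
    B.d n f p = f p.succ * B.s n + f p.castSucc * B.t n := rfl

lemma PBW.m_apply (n : ℕ) (f : Fin (n + 1) → R) (p : Fin (n + 1)) :
    B.m n f p = f p * (B.x - algebraMap ℂ R (lam n p)) := rfl

lemma PBW.d_d (n : ℕ) (f : Fin (n + 2) → R) : B.d n (B.d (n + 1) f) = 0 := by
  ext p
  have h1 : B.s (n + 1) * B.s n = 0 := by
    by_cases h : Even n <;> simp [PBW.s, h, Nat.even_add_one, B.uv, B.vu]
  have h2 : B.t (n + 1) * B.t n = 0 := by
    by_cases h : Even n <;> simp [PBW.t, h, Nat.even_add_one, B.uv, B.vu]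
  have h3 : B.t (n + 1) * B.s n + B.s (n + 1) * B.t n = 0 := by
    by_cases h : Even n <;> simp [PBW.t, PBW.s, h, Nat.even_add_one]
    · exact B.uu
    · rw [add_comm]; exact B.uu
  simp only [PBW.d_apply, add_mul, mul_assoc, h1, h2, Pi.zero_apply, mul_zero, zero_add, add_zero]
  rw [← Fin.succ_castSucc, ← mul_add, h3, mul_zero]

lemma gen_comm (x u : R) (a l l' : ℂ) (h : x * u + u * x = a • u) (hl : l + l' = a) :
    (x - algebraMap ℂ R l) * u = - (u * (x - algebraMap ℂ R l')) := by
  subst hl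
  rw [sub_mul, mul_sub, ← Algebra.commutes l' u, ← Algebra.smul_def, ← Algebra.smul_def,
    eq_sub_of_add_eq h, add_smul]
  abel

lemma PBW.s_comm (n p : ℕ) :
    (B.x - algebraMap ℂ R (lam (n + 1) (p + 1))) * B.s (n + 1) =
      - (B.s (n + 1) * (B.x - algebraMap ℂ R (lam n p))) := by
  by_cases h : Even n
  · apply gen_comm (a := -1)
    · simp [PBW.s, h, Nat.even_add_one, B.xv]
    · simp [lam, pow_succ, h.neg_one_pow]; ring
  · apply gen_comm (a := 1)
    · simp [PBW.s, h, Nat.even_add_one, B.xu]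
    · simp [lam, pow_succ, (Nat.not_even_iff_odd.1 h).neg_one_pow]; ring

lemma PBW.t_comm (n p : ℕ) :
    (B.x - algebraMap ℂ R (lam (n + 1) p)) * B.t (n + 1) =
      - (B.t (n + 1) * (B.x - algebraMap ℂ R (lam n p))) := by
  by_cases h : Even n
  · apply gen_comm (a := 1)
    · simp [PBW.t, h, Nat.even_add_one, B.xu]
    · simp [lam, pow_succ, h.neg_one_pow]
  · apply gen_comm (a := -1)
    · simp [PBW.t, h, Nat.even_add_one, B.xv]
    · simp [lam, pow_succ, (Nat.not_even_iff_odd.1 h).neg_one_pow]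

lemma PBW.d_m (n : ℕ) (f : Fin (n + 2) → R) :
    B.d (n + 1) (B.m (n + 1) f) = - B.m n (B.d (n + 1) f) := by
  ext p
  simp only [PBW.d_apply, PBW.m_apply, Pi.neg_apply, mul_assoc, add_mul, Fin.val_succ,
    Fin.val_castSucc, B.s_comm, B.t_comm]
  simp only [mul_neg, neg_add]

/-- The terms of the resolution. -/
abbrev P (R : Type) (n : ℕ) : Type := (Fin (n + 1) → R) × (Fin n → R)

/-- The differential of the resolution. -/
noncomputable def PBW.D (n : ℕ) : P R (n + 1) →ₗ[R] P R n where
  toFun z := (B.d (n + 1) z.1 + B.m n z.2, B.d n z.2)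
  map_add' a b := by ext1 <;> simp only [Prod.fst_add, Prod.snd_add, map_add]; abel
  map_smul' a b := by ext1 <;> simp

lemma PBW.D_apply (n : ℕ) (z : P R (n + 1)) :
    B.D n z = (B.d (n + 1) z.1 + B.m n z.2, B.d n z.2) := rfl

lemma PBW.D_D (n : ℕ) (z : P R (n + 2)) : B.D n (B.D (n + 1) z) = 0 := by
  simp only [PBW.D_apply, map_add, B.d_d, B.d_m]
  ext1 <;> simp

lemma ex_aux (n : ℕ) (s t : R) (α β γ δ : R →ₗ[ℂ] ℂ[X])
    (inj : ∀ r r', α r = α r' → β r = β r' → γ r = γ r' → δ r = δ r' → r = r')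
    (surj : ∀ a b c d, ∃ r, α r = a ∧ β r = b ∧ γ r = c ∧ δ r = d)
    (hs : ∀ r, α (r * s) = 0 ∧ β (r * s) = α r ∧ γ (r * s) = 0 ∧ δ (r * s) = β r)
    (ht : ∀ r, α (r * t) = 0 ∧ β (r * t) = 0 ∧ γ (r * t) = α r ∧ δ (r * t) = - γ r)
    (f : Fin (n + 2) → R) (hf : ∀ p : Fin (n + 1), f p.succ * s + f p.castSucc * t = 0) :
    ∃ f' : Fin (n + 3) → R, ∀ p : Fin (n + 2), f' p.succ * t + f' p.castSucc * s = f p := by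
  have hδ : ∀ p : Fin (n + 1), β (f p.succ) = γ (f p.castSucc) := by
    intro p
    have := congrArg δ (hf p)
    rw [map_add, (hs _).2.2.2, (ht _).2.2.2, map_zero] at this
    linear_combination this
  have hβ : ∀ p : Fin (n + 1), α (f p.succ) = 0 := by
    intro p
    have := congrArg β (hf p)
    rw [map_add, (hs _).2.1, (ht _).2.1, map_zero] at this
    linear_combination this
  have hγ : ∀ p : Fin (n + 1), α (f p.castSucc) = 0 := by
    intro p
    have := congrArg γ (hf p)
    rw [map_add, (hs _).2.2.1, (ht _).2.2.1, map_zero] at this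
    linear_combination this
  have hα : ∀ p, α (f p) = 0 := by
    intro p
    induction p using Fin.lastCases with
    | last => exact hβ (Fin.last n)
    | cast p => exact hγ p
  choose g hg using fun p => surj (β (f p)) (δ (f p)) 0 0
  obtain ⟨l, hl⟩ := surj (γ (f (Fin.last _))) 0 0 0
  refine ⟨Fin.snoc (α := fun _ => R) g l, fun p => ?_⟩
  have key : α (Fin.snoc (α := fun _ => R) g l p.succ) = γ (f p) ∧
      γ (Fin.snoc (α := fun _ => R) g l p.succ) = 0 := by
    induction p using Fin.lastCases with
    | last => rw [Fin.succ_last, Fin.snoc_last]; exact ⟨hl.1, hl.2.2.1⟩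
    | cast p =>
      rw [Fin.succ_castSucc, Fin.snoc_castSucc]
      exact ⟨(hg _).1.trans (hδ p), (hg _).2.2.1⟩
  rw [Fin.snoc_castSucc]
  obtain ⟨g1, g2, g3, g4⟩ := hg p
  apply inj <;> rw [map_add]
  · rw [(hs _).1, (ht _).1, hα]; simp
  · rw [(hs _).2.1, (ht _).2.1, g1]; simp
  · rw [(hs _).2.2.1, (ht _).2.2.1, key.1]; simp
  · rw [(hs _).2.2.2, (ht _).2.2.2, key.2, g2]; simp

lemma PBW.d_exact (n : ℕ) (f : Fin (n + 2) → R) (hf : B.d (n + 1) f = 0) :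
    ∃ f', B.d (n + 2) f' = f := by
  have hf' := fun p => congrFun hf p
  simp only [PBW.d_apply] at hf'
  by_cases h : Even n
  · obtain ⟨f', h'⟩ := ex_aux n B.v B.u (B.c 0) (B.c 2) (B.c 1) (- B.c 3)
      (fun r r' h0 h1 h2 h3 => B.inj r r' (fun i => by
        fin_cases i <;> first | assumption | simpa using h3))
      (fun a b c d => by
        obtain ⟨r, hr⟩ := B.surj ![a, c, b, -d]
        exact ⟨r, by simp [hr]⟩)
      (fun r => by simp [B.cv]) (fun r => by simp [B.cu]) f
      (fun p => by simpa [PBW.s, PBW.t, Nat.even_add_one, h] using hf' p)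
    refine ⟨f', funext fun p => ?_⟩
    have := h' p
    simpa [PBW.d_apply, PBW.s, PBW.t, Nat.even_add_one, h] using this
  · obtain ⟨f', h'⟩ := ex_aux n B.u B.v (B.c 0) (B.c 1) (B.c 2) (B.c 3)
      (fun r r' h0 h1 h2 h3 => B.inj r r' (fun i => by
        fin_cases i <;> first | assumption | simpa using h3))
      (fun a b c d => by
        obtain ⟨r, hr⟩ := B.surj ![a, b, c, d]
        exact ⟨r, by simp [hr]⟩)
      (fun r => by simp [B.cu]) (fun r => by simp [B.cv]) f
      (fun p => by simpa [PBW.s, PBW.t, Nat.even_add_one, h] using hf' p)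
    refine ⟨f', funext fun p => ?_⟩
    have := h' p
    simpa [PBW.d_apply, PBW.s, PBW.t, Nat.even_add_one, h] using this

/-- Elements without scalar part lie in the ideal generated by `u, v`. -/
lemma PBW.mem_uv (r : R) (h : B.c 0 r = 0) : ∃ a b, r = a * B.u + b * B.v := by
  obtain ⟨a, ha⟩ := B.surj ![B.c 1 r, B.c 3 r, 0, 0]
  obtain ⟨b, hb⟩ := B.surj ![B.c 2 r, 0, 0, 0]
  refine ⟨a, b, B.inj _ _ fun i => ?_⟩
  rw [map_add, B.cu, B.cv]
  fin_cases i <;> simp [ha, hb, h]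

lemma PBW.d_exact_zero (f : Fin 1 → R) (h : B.c 0 (f 0) = 0) :
    ∃ f', B.d 1 f' = f := by
  obtain ⟨a, b, hr⟩ := B.mem_uv _ h
  refine ⟨![a, b], funext fun p => ?_⟩
  fin_cases p
  simp [PBW.d_apply, PBW.s, PBW.t, hr, add_comm]

lemma PBW.c_d (f : Fin 2 → R) : B.c 0 (B.d 1 f 0) = 0 := by
  simp [PBW.d_apply, PBW.s, PBW.t, B.cu, B.cv]

lemma PBW.D_exact (n : ℕ) (z : P R (n + 1)) (hz : B.D n z = 0) :
    ∃ z', B.D (n + 1) z' = z := by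
  obtain ⟨f, g⟩ := z
  rw [PBW.D_apply] at hz
  have h1 : B.d (n + 1) f + B.m n g = 0 := congrArg Prod.fst hz
  have h2 : B.d n g = 0 := congrArg Prod.snd hz
  obtain ⟨g', hg'⟩ : ∃ g', B.d (n + 1) g' = g := by
    cases n with
    | succ n => exact B.d_exact n g h2
    | zero =>
      apply B.d_exact_zero
      have h3 := congrArg (B.c 0) (congrFun h1 0)
      simp only [Pi.add_apply, map_add, B.c_d, PBW.m_apply] at h3
      simpa [lam, B.cx] using h3
  obtain ⟨f', hf'⟩ := B.d_exact n (f - B.m (n + 1) g') (by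
    rw [map_sub, B.d_m, hg', sub_neg_eq_add, h1])
  refine ⟨(f', g'), ?_⟩
  rw [PBW.D_apply]
  simp [hf', hg']

/-- The augmentation. -/
lemma PBW.eps_zero (ε : R →ₐ[ℂ] ℂ) (hu : ε B.u = 0) (hv : ε B.v = 0) (hx : ε B.x = 0)
    (z : P R 0) (hz : ε (z.1 0) = 0) : ∃ z', B.D 0 z' = z := by
  obtain ⟨f, g⟩ := z
  obtain ⟨r', hr'⟩ := B.surj ![divX (B.c 0 (f 0)), 0, 0, 0]
  set a : ℂ := (B.c 0 (f 0)).coeff 0 with ha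
  have h0 : B.c 0 (f 0 - r' * B.x - a • (1 : R)) = 0 := by
    rw [map_sub, map_sub, B.cx, hr', map_smul, B.c1]
    have := divX_mul_X_add (B.c 0 (f 0))
    rw [← ha] at this
    simp only [Matrix.cons_val_zero, smul_eq_C_mul, mul_one]
    linear_combination -this
  have h1 : a = 0 := by
    obtain ⟨y, y', hy⟩ := B.mem_uv _ h0
    have := congrArg ε hy
    simpa [hu, hv, hx, show ε (f 0) = 0 from hz] using this
  obtain ⟨f', hf'⟩ := B.d_exact_zero (fun _ => f 0 - r' * B.x) (by simpa [h1] using h0)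
  refine ⟨(f', fun _ => r'), ?_⟩
  rw [PBW.D_apply]
  refine Prod.ext (funext fun p => ?_) (funext fun p => p.elim0)
  fin_cases p
  simp [hf', PBW.m_apply, lam]

end complex

end BettiAux
namespace BettiAux

open Polynomial CategoryTheory

section cat

variable {R : Type} [Ring R] [Algebra ℂ R] (B : PBW R)

/-- The resolution as a chain complex. -/
noncomputable def PBW.K : ChainComplex (ModuleCat R) ℕ :=
  ChainComplex.of (fun n => ModuleCat.of R (P R n)) (fun n => ModuleCat.ofHom (B.D n))
    (fun n => by
      ext1
      exact LinearMap.ext fun z => B.D_D n z)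

lemma PBW.K_d (n : ℕ) : B.K.d (n + 1) n = ModuleCat.ofHom (B.D n) := by
  exact ChainComplex.of_d (fun n => ModuleCat.of R (P R n)) (fun n => ModuleCat.ofHom (B.D n)) n

variable [Module R ℂ] (ε : R →ₐ[ℂ] ℂ) (hsm : ∀ (r : R) (z : ℂ), r • z = ε r * z)
  (hu : ε B.u = 0) (hv : ε B.v = 0) (hx : ε B.x = 0)

/-- The augmentation. -/
def aug : P R 0 →ₗ[R] ℂ where
  toFun z := ε (z.1 0)
  map_add' a b := by simp
  map_smul' a b := by simp [hsm]

include hu hv hx in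
lemma pf_aux : B.K.d 1 0 ≫ (show B.K.X 0 ⟶ ModuleCat.of R ℂ from ModuleCat.ofHom (aug ε hsm)) = 0 := by
  rw [B.K_d]
  ext1
  refine LinearMap.ext fun z => ?_
  change ε ((B.d 1 z.1 + B.m 0 z.2) 0) = 0
  simp [PBW.d_apply, PBW.m_apply, PBW.s, PBW.t, lam, hu, hv, hx]

/-- The projective resolution. -/
noncomputable def PBW.res : ProjectiveResolution (ModuleCat.of R ℂ) where
  complex := B.K
  projective n := by
    change Projective (ModuleCat.of R (P R n))
    infer_instance
  π := (ChainComplex.toSingle₀Equiv _ _).symm ⟨ModuleCat.ofHom (aug ε hsm), pf_aux B ε hsm hu hv hx⟩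
  quasiIso := ⟨fun n => by
    cases n with
    | zero =>
      rw [ChainComplex.quasiIsoAt₀_iff, ShortComplex.quasiIso_iff_of_zeros']
      · constructor
        · rw [ShortComplex.moduleCat_exact_iff]
          intro z hz
          have hz' := (LinearMap.congr_fun (congrArg ModuleCat.Hom.hom
            (ChainComplex.toSingle₀Equiv_symm_apply_f_zero (C := B.K) (X := ModuleCat.of R ℂ)
              (ModuleCat.ofHom (aug ε hsm)) (pf_aux B ε hsm hu hv hx))) z).symm.trans hz
          obtain ⟨y, hy⟩ := B.eps_zero ε hu hv hx z hz'
          refine ⟨y, ?_⟩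
          change (B.K.d 1 0).hom y = z
          rw [B.K_d]
          exact hy
        · rw [ModuleCat.epi_iff_surjective]
          intro a
          refine ⟨((fun _ => algebraMap ℂ R a, 0) : P R 0), ?_⟩
          refine (LinearMap.congr_fun (congrArg ModuleCat.Hom.hom
            (ChainComplex.toSingle₀Equiv_symm_apply_f_zero (C := B.K) (X := ModuleCat.of R ℂ)
              (ModuleCat.ofHom (aug ε hsm)) (pf_aux B ε hsm hu hv hx))) _).trans ?_
          exact ε.commutes a
      all_goals rfl
    | succ n =>
      rw [quasiIsoAt_iff_exactAt']
      · rw [HomologicalComplex.exactAt_iff' _ (n + 2) (n + 1) n (by simp) (by simp)]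
        rw [ShortComplex.moduleCat_exact_iff]
        intro z hz
        simp only [HomologicalComplex.shortComplexFunctor'_obj_g, HomologicalComplex.sc',
          HomologicalComplex.shortComplexFunctor'_obj_f, B.K_d] at hz ⊢
        exact B.D_exact n z hz
      · apply ChainComplex.exactAt_succ_single_obj⟩

lemma finrank_hom (S : ShortComplex (ModuleCat ℂ)) (L : S.X₂ →ₗ[ℂ] ℂ)
    (ha : ∀ z, L (S.f z) = 0) (hb : ∀ z, S.g z = 0 → L z = 0 → ∃ y, S.f y = z)
    (hc : ∃ z, S.g z = 0 ∧ L z = 1) : Module.finrank ℂ S.homology = 1 := by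
  rw [S.moduleCatHomologyIso.toLinearEquiv.finrank_eq]
  let L' : LinearMap.ker S.g.hom →ₗ[ℂ] ℂ := L.comp (LinearMap.ker S.g.hom).subtype
  have hk : LinearMap.ker L' = LinearMap.range S.moduleCatToCycles := by
    ext ⟨z, hz⟩
    constructor
    · intro h
      obtain ⟨y, hy⟩ := hb z hz h
      exact ⟨y, Subtype.ext hy⟩
    · rintro ⟨y, hy⟩
      rw [← hy]
      exact ha y
  have hs : Function.Surjective L' := by
    obtain ⟨z, hz, h1⟩ := hc
    intro a
    refine ⟨a • ⟨z, hz⟩, ?_⟩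
    rw [map_smul]
    change a • L z = a
    simp [h1]
  change Module.finrank ℂ (LinearMap.ker S.g.hom ⧸ LinearMap.range S.moduleCatToCycles) = 1
  rw [← hk, (L'.quotKerEquivOfSurjective hs).finrank_eq]
  simp

include hsm in
lemma lin_apply (n : ℕ) (z : P R n →ₗ[R] ℂ) (w : P R n) :
    z w = ∑ p, ε (w.1 p) * z (Pi.single p 1, 0) + ∑ p, ε (w.2 p) * z (0, Pi.single p 1) := by
  have h1 : w = ∑ p, w.1 p • ((Pi.single p 1, 0) : P R n) +
      ∑ p, w.2 p • ((0, Pi.single p 1) : P R n) := by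
    ext q
    · simp [Prod.fst_sum, Finset.sum_apply, Pi.single_apply]
    · simp [Prod.snd_sum, Finset.sum_apply, Pi.single_apply]
  conv_lhs => rw [h1]
  simp only [map_add, map_sum, map_smul, hsm]

/-- The linear functional with given coefficients. -/
noncomputable def mkL (n : ℕ) (φ : Fin (n + 1) → ℂ) (ψ : Fin n → ℂ) : P R n →ₗ[R] ℂ where
  toFun w := ∑ p, ε (w.1 p) * φ p + ∑ p, ε (w.2 p) * ψ p
  map_add' a b := by simp [add_mul, Finset.sum_add_distrib]; ring
  map_smul' a b := by simp [hsm, mul_add, Finset.mul_sum, mul_assoc]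

include hu hv in
lemma eps_d (n : ℕ) (f : Fin (n + 1) → R) (p : Fin n) : ε (B.d n f p) = 0 := by
  rw [PBW.d_apply, PBW.s, PBW.t]
  split_ifs <;> simp [hu, hv]

include hx in
lemma eps_m (n : ℕ) (f : Fin (n + 1) → R) (p : Fin (n + 1)) :
    ε (B.m n f p) = - (lam n p * ε (f p)) := by
  rw [PBW.m_apply]
  simp [hx, mul_comm]

include hsm hu hv hx in
lemma lin_D (n : ℕ) (z : P R n →ₗ[R] ℂ) (w : P R (n + 1)) :
    z (B.D n w) = ∑ p : Fin (n + 1), - (lam n p * ε (w.2 p)) * z (Pi.single p 1, 0) := by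
  rw [lin_apply ε hsm, PBW.D_apply]
  simp [eps_d B ε hu hv, eps_m B ε hx]

include hsm hu hv hx in
lemma lin_D_single (n : ℕ) (z : P R n →ₗ[R] ℂ) (p : Fin (n + 1)) :
    z (B.D n (0, Pi.single p 1)) = - (lam n p * z (Pi.single p 1, 0)) := by
  rw [lin_D B ε hsm hu hv hx, Finset.sum_eq_single p]
  · simp
  · intro q _ hq
    simp [hq]
  · simp

lemma lam_eq_zero (n p : ℕ) : lam n p = 0 ↔ 2 * p = n := by
  simp only [lam, mul_eq_zero, pow_eq_zero_iff', neg_eq_zero, one_ne_zero, false_and, false_or,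
    sub_eq_zero]
  exact_mod_cast Iff.rfl

/-- The element detecting the cohomology. -/
def det (n : ℕ) : P R n :=
  (fun p => if 2 * (p : ℕ) = n then 1 else 0, fun p => if 2 * (p : ℕ) + 1 = n then 1 else 0)

include hsm hu hv hx in
lemma det_a (n : ℕ) (z : P R n →ₗ[R] ℂ) : z (B.D n (det (n + 1))) = 0 := by
  rw [lin_D B ε hsm hu hv hx]
  refine Finset.sum_eq_zero fun p _ => ?_
  by_cases h : 2 * (p : ℕ) = n
  · rw [(lam_eq_zero n p).2 h]; simp
  · simp [det, h]

include hsm hu hv hx in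
lemma det_phi (n : ℕ) (z : P R n →ₗ[R] ℂ) (h : ∀ w, z (B.D n w) = 0) (hL : z (det n) = 0)
    (p : Fin (n + 1)) : z (Pi.single p 1, 0) = 0 := by
  have h1 := h (0, Pi.single p 1)
  rw [lin_D_single B ε hsm hu hv hx] at h1
  by_cases hp : 2 * (p : ℕ) = n
  · have : det n = ((Pi.single p 1, 0) : P R n) := by
      ext q
      · have : (2 * (q : ℕ) = n) ↔ q = p := by rw [Fin.ext_iff]; omega
        simp [det, Pi.single_apply, this]
      · have : ¬ (2 * (q : ℕ) + 1 = n) := by omega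
        simp [det, this]
    rwa [← this]
  · have := mt (lam_eq_zero n p).1 hp
    simpa [this] using h1

include hsm hu hv hx in
lemma det_psi (n : ℕ) (z : P R n →ₗ[R] ℂ) (hL : z (det n) = 0)
    (p : Fin n) (hp : 2 * (p : ℕ) + 1 = n) : z (0, Pi.single p 1) = 0 := by
  have : det n = ((0, Pi.single p 1) : P R n) := by
    ext q
    · have : ¬ (2 * (q : ℕ) = n) := by omega
      simp [det, this]
    · have : (2 * (q : ℕ) + 1 = n) ↔ q = p := by rw [Fin.ext_iff]; omega
      simp [det, Pi.single_apply, this]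
  rwa [← this]

include hsm hu hv hx in
lemma det_b_zero (z : P R 0 →ₗ[R] ℂ) (h : ∀ w, z (B.D 0 w) = 0) (hL : z (det 0) = 0) :
    z = 0 := by
  refine LinearMap.ext fun w => ?_
  rw [lin_apply ε hsm]
  simp only [det_phi B ε hsm hu hv hx 0 z h hL]
  simp

include hsm hu hv hx in
lemma det_b_succ (n : ℕ) (z : P R (n + 1) →ₗ[R] ℂ) (h : ∀ w, z (B.D (n + 1) w) = 0)
    (hL : z (det (n + 1)) = 0) : ∃ y : P R n →ₗ[R] ℂ, y.comp (B.D n) = z := by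
  refine ⟨mkL ε hsm n (fun p => - z (0, Pi.single p 1) / lam n p) 0, ?_⟩
  refine LinearMap.ext fun w => ?_
  rw [LinearMap.comp_apply, lin_apply ε hsm _ z w]
  simp only [det_phi B ε hsm hu hv hx _ z h hL]
  change ∑ p, ε ((B.d (n + 1) w.1 + B.m n w.2) p) * _ + ∑ p, ε (B.d n w.2 p) * 0 = _
  simp only [mul_zero, Finset.sum_const_zero, zero_add, add_zero]
  refine Finset.sum_congr rfl fun p _ => ?_
  rw [Pi.add_apply, map_add, eps_d B ε hu hv, eps_m B ε hx]
  by_cases hp : 2 * (p : ℕ) = n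
  · rw [det_psi B ε hsm hu hv hx _ z hL p (by omega)]; simp
  · have := mt (lam_eq_zero n p).1 hp
    field_simp
    ring

include hsm hu hv hx in
lemma det_c (n : ℕ) : ∃ z : P R n →ₗ[R] ℂ, (∀ w, z (B.D n w) = 0) ∧ z (det n) = 1 := by
  refine ⟨mkL ε hsm n (fun p => if 2 * (p : ℕ) = n then 1 else 0)
    (fun p => if 2 * (p : ℕ) + 1 = n then 1 else 0), fun w => ?_, ?_⟩
  · rw [lin_D B ε hsm hu hv hx]
    refine Finset.sum_eq_zero fun p _ => ?_
    by_cases h : 2 * (p : ℕ) = n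
    · rw [(lam_eq_zero n p).2 h]; simp
    · have h1 : ∀ q : Fin (n + 1), 2 * (q : ℕ) = n → q ≠ p := by
        rintro q hq rfl; exact h hq
      simp only [mkL, LinearMap.coe_mk, AddHom.coe_mk, Pi.zero_apply, map_zero, zero_mul,
        Finset.sum_const_zero, add_zero]
      rw [Finset.sum_eq_zero, mul_zero]
      intro q _
      by_cases hq : 2 * (q : ℕ) = n
      · simp [h1 q hq]
      · simp [hq]
  · change ∑ p : Fin (n + 1), ε (if 2 * (p : ℕ) = n then 1 else 0) *
      (if 2 * (p : ℕ) = n then (1 : ℂ) else 0) +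
      ∑ p : Fin n, ε (if 2 * (p : ℕ) + 1 = n then 1 else 0) *
      (if 2 * (p : ℕ) + 1 = n then (1 : ℂ) else 0) = 1
    rcases Nat.even_or_odd' n with ⟨m, hm | hm⟩
    · rw [Finset.sum_eq_single (⟨m, by omega⟩ : Fin (n + 1)), Finset.sum_eq_zero]
      · simp [hm]
      · intro q _
        simp [show ¬ (2 * (q : ℕ) + 1 = n) by omega]
      · intro q _ hq
        rw [Ne, Fin.ext_iff] at hq
        simp only at hq
        simp [show ¬ (2 * (q : ℕ) = n) by omega]
      · simp
    · rw [Finset.sum_eq_single (⟨m, by omega⟩ : Fin n), Finset.sum_eq_zero]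
      · simp [hm]
      · intro q _
        simp [show ¬ (2 * (q : ℕ) = n) by omega]
      · intro q _ hq
        rw [Ne, Fin.ext_iff] at hq
        simp only at hq
        simp [show ¬ (2 * (q : ℕ) + 1 = n) by omega]
      · simp

/-- Evaluation at the detecting element. -/
noncomputable def evL (n : ℕ) :
    ((B.K.linearYonedaObj ℂ (ModuleCat.of R ℂ)).X n) →ₗ[ℂ] ℂ where
  toFun z := (show ModuleCat.of R (P R n) ⟶ ModuleCat.of R ℂ from z).hom (det n)
  map_add' a b := rfl
  map_smul' a b := by
    change algebraMap ℂ R a • (_ : ℂ) = _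
    rw [hsm, ε.commutes]
    rfl

include hsm hu hv hx in
lemma finrank_homology (n : ℕ) :
    Module.finrank ℂ ((B.K.linearYonedaObj ℂ (ModuleCat.of R ℂ)).homology n) = 1 := by
  cases n with
  | zero =>
    refine (ShortComplex.homologyMapIso
      ((B.K.linearYonedaObj ℂ (ModuleCat.of R ℂ)).isoSc' 0 0 1 (by simp)
        (by simp))).toLinearEquiv.finrank_eq.trans ?_
    apply finrank_hom _ (evL B ε hsm 0)
    · intro z
      change (B.K.d 0 0 ≫ (show ModuleCat.of R (P R 0) ⟶ ModuleCat.of R ℂ from z)).hom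
        (det 0) = 0
      rw [B.K.shape 0 0 (by simp)]
      exact LinearMap.map_zero
        (ModuleCat.Hom.hom (show ModuleCat.of R (P R 0) ⟶ ModuleCat.of R ℂ from z))
    · intro z hz hL
      have hz' : B.K.d 1 0 ≫
        (show ModuleCat.of R (P R 0) ⟶ ModuleCat.of R ℂ from z) = 0 := hz
      rw [B.K_d] at hz'
      have hy := det_b_zero B ε hsm hu hv hx
        (show ModuleCat.of R (P R 0) ⟶ ModuleCat.of R ℂ from z).hom
        (fun w => LinearMap.congr_fun (congrArg ModuleCat.Hom.hom hz') w) hL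
      refine ⟨0, ?_⟩
      rw [map_zero]
      exact (ModuleCat.hom_ext hy).symm
    · obtain ⟨z, hz, h1⟩ := det_c B ε hsm hu hv hx 0
      refine ⟨(ModuleCat.ofHom z :), ?_, h1⟩
      change B.K.d 1 0 ≫ ModuleCat.ofHom z = 0
      rw [B.K_d]
      exact ModuleCat.hom_ext (LinearMap.ext hz)
  | succ n =>
    refine (ShortComplex.homologyMapIso
      ((B.K.linearYonedaObj ℂ (ModuleCat.of R ℂ)).isoSc' n (n + 1) (n + 2) (by simp)
        (by simp))).toLinearEquiv.finrank_eq.trans ?_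
    apply finrank_hom _ (evL B ε hsm (n + 1))
    · intro z
      change (B.K.d (n + 1) n ≫ (show ModuleCat.of R (P R n) ⟶ ModuleCat.of R ℂ from z)).hom
        (det (n + 1)) = 0
      rw [B.K_d]
      exact det_a B ε hsm hu hv hx n _
    · intro z hz hL
      have hz' : B.K.d (n + 2) (n + 1) ≫
        (show ModuleCat.of R (P R (n + 1)) ⟶ ModuleCat.of R ℂ from z) = 0 := hz
      rw [B.K_d] at hz'
      obtain ⟨y, hy⟩ := det_b_succ B ε hsm hu hv hx n
        (show ModuleCat.of R (P R (n + 1)) ⟶ ModuleCat.of R ℂ from z).hom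
        (fun w => LinearMap.congr_fun (congrArg ModuleCat.Hom.hom hz') w) hL
      refine ⟨(ModuleCat.ofHom y :), ?_⟩
      change B.K.d (n + 1) n ≫ ModuleCat.ofHom y = z
      rw [B.K_d]
      exact ModuleCat.hom_ext hy
    · obtain ⟨z, hz, h1⟩ := det_c B ε hsm hu hv hx (n + 1)
      refine ⟨(ModuleCat.ofHom z :), ?_, h1⟩
      change B.K.d (n + 2) (n + 1) ≫ ModuleCat.ofHom z = 0
      rw [B.K_d]
      exact ModuleCat.hom_ext (LinearMap.ext hz)

include hsm hu hv hx in
lemma finrank_ext (n : ℕ) : Module.finrank ℂ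
    (((Ext ℂ (ModuleCat R) n).obj (Opposite.op (ModuleCat.of R ℂ))).obj (ModuleCat.of R ℂ)) = 1 :=
  (((B.res ε hsm hu hv hx).isoExt (R := ℂ) n
    (ModuleCat.of R ℂ)).toLinearEquiv.finrank_eq).trans (finrank_homology B ε hsm hu hv hx n)

end cat

end BettiAux
theorem betti_numbers (ε : RingQuot CRel →ₐ[ℂ] ℂ)
    (hε : ∀ i : Fin 3, ε (RingQuot.mkAlgHom ℂ CRel (ι ℂ i)) = 0) :
    (∀ n : ℕ, extDim (RingQuot CRel) ε n = 1) ∧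
    (PowerSeries.mk fun n => (extDim (RingQuot CRel) ε n : ℚ)) * (1 - PowerSeries.X) =
      1 := by
  have main : ∀ n : ℕ, extDim (RingQuot CRel) ε n = 1 := by
    intro n
    have h : ∀ i, ε (BettiAux.e i) = 0 := hε
    letI : Module (RingQuot CRel) ℂ := Module.compHom ℂ ε.toRingHom
    exact BettiAux.finrank_ext BettiAux.pbw ε (fun _ _ => rfl)
      (by simp [BettiAux.pbw, h]) (by simp [BettiAux.pbw, h]) (by simp [BettiAux.pbw, h]) n
  refine ⟨main, ?_⟩
  simp only [main, Nat.cast_one]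
  exact PowerSeries.mk_one_mul_one_sub_eq_one ℚ
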